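/- Let k ≥ 1 and let G be a multigraph with n ≥ 1 vertices. Then G has at most (k−1)(n−1) k-interconnection edges. -/

import Mathlib

universe u

structure Multigraph (V : Type u) where
  edges : Multiset (Sym2 V)
  loopless : ∀ e ∈ edges, ¬ e.IsDiag

namespace Multigraph

variable {V : Type u}

/-- Reachability via the edges of a multiset of (undirected) edges. -/
def MReach (F : Multiset (Sym2 V)) : V → V → Prop :=
  Relation.ReflTransGen (fun x y => s(x, y) ∈ F)

/-- Reachability in a multigraph. -/
def Reachable (G : Multigraph V) : V → V → Prop := MReach G.edges

open Classical in
/-- Delete a multiset of edges. -/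
noncomputable def deleteEdges (G : Multigraph V) (F : Multiset (Sym2 V)) : Multigraph V :=
  ⟨G.edges - F, fun e he => G.loopless e (Multiset.mem_of_le (tsub_le_self) he)⟩

/-- `lam G x y` : the minimum number of edges whose deletion disconnects `x` from `y`
(`⊤` if no set of edges disconnects them, e.g. when `x = y`). -/
noncomputable def lam (G : Multigraph V) (x y : V) : ℕ∞ :=
  sInf {n : ℕ∞ | ∃ F : Multiset (Sym2 V), F ≤ G.edges ∧
      ¬ (G.deleteEdges F).Reachable x y ∧ n = (Multiset.card F : ℕ∞)}

open Classical in
/-- The multigraph with edge multiset `F`, discarding self-loops. -/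
noncomputable def ofEdges (F : Multiset (Sym2 V)) : Multigraph V :=
  ⟨F.filter (fun e => ¬ e.IsDiag), fun e he => (Multiset.mem_filter.mp he).2⟩

open Classical in
/-- The subgraph of `G` induced by the vertex set `S`. -/
noncomputable def induce (G : Multigraph V) (S : Set V) : Multigraph V :=
  ⟨G.edges.filter (fun e => ∀ v ∈ e, v ∈ S), fun e he =>
      G.loopless e (Multiset.mem_filter.mp he).1⟩

/-- The induced subgraph `G[S]` is `k`-edge-connected. -/
def IsKEdgeConnectedSet (G : Multigraph V) (k : ℕ) (S : Set V) : Prop :=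
  S.Nonempty ∧ ∀ x ∈ S, ∀ y ∈ S, (k : ℕ∞) ≤ (G.induce S).lam x y

/-- `G[S]` is a maximal `k`-edge-connected subgraph of `G`. -/
def IsMaxKEdgeConnectedSubgraph (G : Multigraph V) (k : ℕ) (S : Set V) : Prop :=
  G.IsKEdgeConnectedSet k S ∧
    ∀ T : Set V, S ⊆ T → G.IsKEdgeConnectedSet k T → T = S


/-- `e` is a `k`-interconnection edge: its two endpoints lie in different maximal
`k`-edge-connected subgraphs of `G`. -/
def IsInterconnectionEdge (G : Multigraph V) (k : ℕ) (e : Sym2 V) : Prop :=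
  ¬ ∃ S : Set V, G.IsMaxKEdgeConnectedSubgraph k S ∧ ∀ v ∈ e, v ∈ S

open Classical in
/-- The multiset of `k`-interconnection edges of `G`. -/
noncomputable def interEdges (G : Multigraph V) (k : ℕ) : Multiset (Sym2 V) :=
  G.edges.filter (G.IsInterconnectionEdge k)

end Multigraph

namespace Multigraph

/-- `e` lies within `S` and in no `k`-edge-connected set. -/
def BadIn {V : Type u} (G : Multigraph V) (k : ℕ) (S : Set V) (e : Sym2 V) : Prop :=
  (∀ v ∈ e, v ∈ S) ∧ ¬ ∃ T : Set V, G.IsKEdgeConnectedSet k T ∧ ∀ v ∈ e, v ∈ T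

open Classical in
theorem bad_card_le {V : Type u} [Fintype V] (k : ℕ) (hk : 1 ≤ k) (G : Multigraph V) :
    ∀ (n : ℕ) (S : Set V), S.Nonempty → S.ncard = n →
      Multiset.card (G.edges.filter (G.BadIn k S)) ≤ (k - 1) * (n - 1) := by
  intro n
  induction n using Nat.strong_induction_on with
  | _ n ih =>
  intro S hS hn
  by_cases hc : G.IsKEdgeConnectedSet k S
  · have : G.edges.filter (G.BadIn k S) = 0 := by
      rw [Multiset.filter_eq_nil]
      rintro e - ⟨h1, h2⟩
      exact h2 ⟨S, hc, h1⟩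
    rw [this]
    simp
  · have hc2 : ∃ x ∈ S, ∃ y ∈ S, (G.induce S).lam x y < (k : ℕ∞) := by
      by_contra hcon
      push Not at hcon
      exact hc ⟨hS, hcon⟩
    obtain ⟨x, hx, y, hy, hlt⟩ := hc2
    unfold lam at hlt
    rw [sInf_lt_iff] at hlt
    obtain ⟨_, ⟨F, hF, hnr, rfl⟩, hFk⟩ := hlt
    have hFk' : Multiset.card F < k := by exact_mod_cast hFk
    set A : Set V := {v | v ∈ S ∧ ((G.induce S).deleteEdges F).Reachable x v} with hA
    set B : Set V := S \ A with hB
    have hAS : A ⊆ S := fun v hv => hv.1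
    have hxA : x ∈ A := ⟨hx, Relation.ReflTransGen.refl⟩
    have hyB : y ∈ B := ⟨hy, fun h => hnr h.2⟩
    have hsum : B.ncard + A.ncard = S.ncard :=
      Set.ncard_sdiff_add_ncard_of_subset hAS (Set.toFinite _)
    have hA0 : 0 < A.ncard := (Set.ncard_pos (Set.toFinite _)).2 ⟨x, hxA⟩
    have hB0 : 0 < B.ncard := (Set.ncard_pos (Set.toFinite _)).2 ⟨y, hyB⟩
    have iA := ih A.ncard (by omega) A ⟨x, hxA⟩ rfl
    have iB := ih B.ncard (by omega) B ⟨y, hyB⟩ rfl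
    have hstep : ∀ a ∈ A, ∀ b ∈ B, s(a, b) ∉ (G.induce S).edges - F := by
      intro a ha b hb hm
      exact hb.2 ⟨hb.1, Relation.ReflTransGen.tail ha.2 hm⟩
    have hcross : ∀ e : Sym2 V, (∀ v ∈ e, v ∈ S) → ¬ (∀ v ∈ e, v ∈ A) → ¬ (∀ v ∈ e, v ∈ B) →
        e ∉ (G.induce S).edges - F := by
      intro e
      induction e using Sym2.ind with
      | _ a b =>
      intro h1 h2 h3
      simp only [Sym2.mem_iff, forall_eq_or_imp, forall_eq] at h1 h2 h3
      by_cases ha : a ∈ A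
      · exact hstep a ha b ⟨h1.2, fun hb => h2 ⟨ha, hb⟩⟩
      · have hb : b ∈ A := by
          by_contra hb
          exact h3 ⟨⟨h1.1, ha⟩, ⟨h1.2, hb⟩⟩
        rw [Sym2.eq_swap]
        exact hstep b hb a ⟨h1.1, ha⟩
    have hle : G.edges.filter (G.BadIn k S) ≤
        G.edges.filter (G.BadIn k A) +
        G.edges.filter (G.BadIn k B) + F := by
      rw [Multiset.le_iff_count]
      intro e
      rw [Multiset.count_add, Multiset.count_add, Multiset.count_filter, Multiset.count_filter,
        Multiset.count_filter]
      by_cases h : G.BadIn k S e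
      · rw [if_pos h]
        by_cases h2 : ∀ v ∈ e, v ∈ A
        · rw [if_pos (c := G.BadIn k A e) ⟨h2, h.2⟩]
          omega
        by_cases h3 : ∀ v ∈ e, v ∈ B
        · rw [if_pos (c := G.BadIn k B e) ⟨h3, h.2⟩]
          omega
        have h4 := Multiset.count_eq_zero_of_notMem (hcross e h.1 h2 h3)
        rw [Multiset.count_sub] at h4
        have h5 : Multiset.count e (G.induce S).edges = Multiset.count e G.edges := by
          unfold induce
          exact @Multiset.count_filter_of_pos _ _ _ (fun _ => Classical.propDecidable _) _ _ h.1
        omega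
      · rw [if_neg h]
        exact Nat.zero_le _
    have hcard := Multiset.card_le_card hle
    rw [Multiset.card_add, Multiset.card_add] at hcard
    obtain ⟨a, ha⟩ : ∃ a, A.ncard = a + 1 := ⟨A.ncard - 1, by omega⟩
    obtain ⟨b, hb⟩ : ∃ b, B.ncard = b + 1 := ⟨B.ncard - 1, by omega⟩
    have hn' : n - 1 = a + b + 1 := by omega
    rw [ha, Nat.add_sub_cancel] at iA
    rw [hb, Nat.add_sub_cancel] at iB
    rw [hn', mul_add, mul_add, mul_one]
    omega

theorem exists_max {V : Type u} [Fintype V] (k : ℕ) (G : Multigraph V) (T : Set V)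
    (hT : G.IsKEdgeConnectedSet k T) :
    ∃ S, T ⊆ S ∧ G.IsMaxKEdgeConnectedSubgraph k S := by
  obtain ⟨S, hTS, hS⟩ :=
    (Set.toFinite {S : Set V | G.IsKEdgeConnectedSet k S}).exists_le_maximal hT
  exact ⟨S, hTS, hS.1, fun U hSU hU => (hS.2 hU hSU).antisymm hSU⟩

end Multigraph

theorem interconnection_edges_card_le {V : Type u} [Fintype V]
    (k : ℕ) (hk : 1 ≤ k) (G : Multigraph V) (hn : 1 ≤ Fintype.card V) :
    Multiset.card (G.interEdges k) ≤ (k - 1) * (Fintype.card V - 1) := by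
  classical
  have : Nonempty V := Fintype.card_pos_iff.1 hn
  have h := Multigraph.bad_card_le k hk G _ Set.univ Set.univ_nonempty rfl
  rw [Set.ncard_univ, Nat.card_eq_fintype_card] at h
  refine le_trans (Multiset.card_le_card ?_) h
  unfold Multigraph.interEdges
  refine Multiset.monotone_filter_right _ ?_
  intro e he
  refine ⟨fun _ _ => Set.mem_univ _, ?_⟩
  rintro ⟨T, hT, heT⟩
  obtain ⟨S, hTS, hS⟩ := Multigraph.exists_max k G T hT
  exact he ⟨S, hS, fun v hv => hTS (heT v hv)⟩
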